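/- arXiv:2505.06050 — 4 statements merged into one kernel-verified Lean document; each statement's English description precedes it below -/
import Mathlib

section
/- For positive semidefinite operators A, B on a finite-dimensional Hilbert space and any s ∈ [0,1], one has Tr(A·{A ≤ B}) + Tr(B·{A > B}) ≤ Tr(A^{1-s} B^s), where {A ≤ B} denotes the projection onto the span of eigenvectors of A−B with non-positive eigenvalues and {A > B} its complement. -/
open scoped ComplexOrder

section QCB
open scoped MatrixOrder Matrix.Norms.L2Operator

/-- The trace of a product of two positive semidefinite matrices is nonnegative. -/
theorem qcb_trace_mul_nonneg {d : ℕ} {X Y : Matrix (Fin d) (Fin d) ℂ}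
    (hX : 0 ≤ X) (hY : 0 ≤ Y) : 0 ≤ ((X * Y).trace).re := by
  obtain ⟨Z, rfl⟩ := CStarAlgebra.nonneg_iff_eq_star_mul_self.mp hX
  have h := (Matrix.nonneg_iff_posSemidef.mp hY).mul_mul_conjTranspose_same Z
  have h2 := h.trace_nonneg
  rw [mul_assoc, Matrix.trace_mul_comm]
  rw [Matrix.star_eq_conjTranspose]
  exact (Complex.le_def.mp h2).1

theorem qcb_rpow_mul {d : ℕ} {X : Matrix (Fin d) (Fin d) ℂ} (hX : 0 ≤ X) (s : ℝ)
    (hs : s ∈ Set.Icc (0:ℝ) 1) : X ^ s * X ^ (1 - s) = X := by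
  rw [CFC.rpow_eq_cfc_real hX, CFC.rpow_eq_cfc_real hX]
  have hfin : (spectrum ℝ X).Finite := Matrix.finite_real_spectrum
  rw [← cfc_mul _ _ X (hfin.continuousOn _) (hfin.continuousOn _)]
  conv_rhs => rw [← cfc_id ℝ X]
  refine cfc_congr fun x hx => ?_
  have hx0 : 0 ≤ x := spectrum_nonneg_of_nonneg hX hx
  have h1 : s + (1 - s) = 1 := by ring
  simp only [id]
  rw [← Real.rpow_add' hx0 (by rw [h1]; exact one_ne_zero), h1, Real.rpow_one]

theorem qcb_main {d : ℕ} {A B D : Matrix (Fin d) (Fin d) ℂ} (hA : 0 ≤ A) (hB : 0 ≤ B)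
    (hD : 0 ≤ D) (hAD : A ≤ B + D) (s : ℝ) (hs : s ∈ Set.Icc (0:ℝ) 1) :
    (A.trace).re - (D.trace).re ≤ ((A ^ (1 - s) * B ^ s).trace).re := by
  have hs' : 1 - s ∈ Set.Icc (0:ℝ) 1 := ⟨by linarith [hs.2], by linarith [hs.1]⟩
  have hBC : B ≤ B + D := le_add_of_nonneg_right hD
  have hC : 0 ≤ B + D := hB.trans hBC
  have e1 := qcb_trace_mul_nonneg (sub_nonneg.mpr (CFC.rpow_le_rpow hs hAD))
    (CFC.rpow_nonneg : 0 ≤ A ^ (1 - s))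
  have e2 := qcb_trace_mul_nonneg (sub_nonneg.mpr (CFC.rpow_le_rpow hs hBC))
    (sub_nonneg.mpr (CFC.rpow_le_rpow hs' hAD))
  have e3 := qcb_trace_mul_nonneg (CFC.rpow_nonneg : 0 ≤ B ^ s)
    (sub_nonneg.mpr (CFC.rpow_le_rpow hs' hBC))
  simp only [sub_mul, mul_sub, qcb_rpow_mul hA s hs, qcb_rpow_mul hB s hs, qcb_rpow_mul hC s hs,
    Matrix.trace_sub, Matrix.trace_add, Complex.sub_re, Complex.add_re] at e1 e2 e3
  rw [Matrix.trace_mul_comm]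
  linarith

end QCB

/-- Audenaert et al. quantum Chernoff bound inequality:
`Tr(A·{A ≤ B}) + Tr(B·{A > B}) ≤ Tr(A^{1-s} B^s)` for PSD matrices `A, B` and `s ∈ [0,1]`,
where `{A ≤ B}` is the spectral projection of `A - B` onto the eigenvalues `≤ 0` and
`{A > B} = I - {A ≤ B}`. -/
theorem quantum_chernoff_bound {d : ℕ} (A B : Matrix (Fin d) (Fin d) ℂ)
    (hA : A.PosSemidef) (hB : B.PosSemidef) (s : ℝ) (hs : s ∈ Set.Icc (0:ℝ) 1) :
    ((A * ((hA.1.sub hB.1).cfc fun x : ℝ => if x ≤ 0 then 1 else 0)).trace).re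
      + ((B * (1 - (hA.1.sub hB.1).cfc fun x : ℝ => if x ≤ 0 then 1 else 0)).trace).re
      ≤ (((hA.1.cfc fun x : ℝ => x ^ (1 - s)) * (hB.1.cfc fun x : ℝ => x ^ s)).trace).re := by
  open scoped MatrixOrder Matrix.Norms.L2Operator in
  have hA0 : 0 ≤ A := Matrix.nonneg_iff_posSemidef.mpr hA
  have hB0 : 0 ≤ B := Matrix.nonneg_iff_posSemidef.mpr hB
  have hH : IsSelfAdjoint (A - B) := (hA.1.sub hB.1).isSelfAdjoint
  rw [← hA.1.cfc_eq, ← hB.1.cfc_eq, ← (hA.1.sub hB.1).cfc_eq,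
    ← CFC.rpow_eq_cfc_real hA0, ← CFC.rpow_eq_cfc_real hB0]
  have hfin : (spectrum ℝ (A - B)).Finite := Matrix.finite_real_spectrum
  have hD : 0 ≤ cfc (fun x : ℝ => max x 0) (A - B) :=
    cfc_nonneg fun x _ => le_max_right x 0
  have hle : A - B ≤ cfc (fun x : ℝ => max x 0) (A - B) := by
    conv_lhs => rw [← cfc_id ℝ (A - B)]
    exact cfc_mono (fun x _ => le_max_left x 0) (hfin.continuousOn _) (hfin.continuousOn _)
  have hP : (A - B) * cfc (fun x : ℝ => if x ≤ 0 then 1 else 0) (A - B)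
      = (A - B) - cfc (fun x : ℝ => max x 0) (A - B) := by
    have h1 : cfc (fun x : ℝ => id x * (if x ≤ 0 then 1 else 0)) (A - B)
        = cfc (fun x : ℝ => id x - max x 0) (A - B) := by
      refine cfc_congr fun x _ => ?_
      by_cases hx : x ≤ 0
      · simp [hx]
      · simp [hx, (not_le.mp hx).le]
    rw [cfc_mul _ _ _ (hfin.continuousOn _) (hfin.continuousOn _),
      cfc_sub _ _ _ (hfin.continuousOn _) (hfin.continuousOn _), cfc_id ℝ (A - B)] at h1
    exact h1
  have key := qcb_main hA0 hB0 hD (sub_le_iff_le_add'.mp hle) s hs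
  have ht := congrArg (fun M => (Matrix.trace M).re) hP
  simp only [sub_mul, mul_sub, mul_one, Matrix.trace_sub, Complex.sub_re] at ht ⊢
  linarith
end

section
/- Let X be a finite alphabet and t a type of length-n sequences over X. Then the number of sequences of type t satisfies (n+1)^{-|X|} · 2^{n H(t)} ≤ |T_n^t| ≤ 2^{n H(t)}, where H(t) = −∑_x t(x) log₂ t(x) is the Shannon entropy. -/
/-- The empirical distribution (type) of a sequence `xs : Fin n → X`. -/
noncomputable def typeOf {X : Type*} [Fintype X] [DecidableEq X] (n : ℕ) (xs : Fin n → X) :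
    X → ℝ :=
  fun a => ((Finset.univ.filter fun i => xs i = a).card : ℝ) / n

/-- Base-2 Shannon entropy. -/
noncomputable def shannonEntropy {X : Type*} [Fintype X] (t : X → ℝ) : ℝ :=
  -∑ x, t x * Real.logb 2 (t x)

/-- The count vector of a sequence. -/
def cntVec {X : Type*} [DecidableEq X] {n : ℕ} (xs : Fin n → X) (a : X) : ℕ :=
  (Finset.univ.filter fun i => xs i = a).card

lemma cntVec_exists_perm {X : Type*} [Fintype X] [DecidableEq X] {n : ℕ} (f g : Fin n → X)
    (h : cntVec f = cntVec g) : ∃ σ : Equiv.Perm (Fin n), f ∘ σ = g := by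
  have e : ∀ a, Nonempty ({i // g i = a} ≃ {i // f i = a}) := by
    intro a
    refine ⟨Fintype.equivOfCardEq ?_⟩
    have := congrFun h a
    simp only [cntVec] at this
    rw [Fintype.card_subtype, Fintype.card_subtype, this]
  have e := fun a => Classical.choice (e a)
  refine ⟨(Equiv.sigmaFiberEquiv g).symm.trans
    ((Equiv.sigmaCongrRight e).trans (Equiv.sigmaFiberEquiv f)), ?_⟩
  funext i
  exact (e (g i) ⟨i, rfl⟩).2

lemma cntVec_comp {X : Type*} [DecidableEq X] {n : ℕ} (f : Fin n → X)
    (σ : Equiv.Perm (Fin n)) : cntVec (f ∘ σ) = cntVec f := by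
  funext a
  simp only [cntVec, Function.comp]
  refine Finset.card_bij (fun i _ => σ i) ?_ ?_ ?_
  · intro i hi; simpa using hi
  · intro i _ j _ h; exact σ.injective h
  · intro j hj; exact ⟨σ.symm j, by simpa using hj, by simp⟩

/-- Exact size of a type class. -/
lemma card_cnt_mul {X : Type*} [Fintype X] [DecidableEq X] {n : ℕ} (f : Fin n → X) :
    (Finset.univ.filter fun g : Fin n → X => cntVec g = cntVec f).card *
      ∏ a, (cntVec f a).factorial = n.factorial := by
  have h1 : (Finset.univ : Finset (Equiv.Perm (Fin n))).card = n.factorial := by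
    rw [Finset.card_univ, Fintype.card_perm, Fintype.card_fin]
  rw [← h1, Finset.card_eq_sum_card_fiberwise (f := fun σ : Equiv.Perm (Fin n) => f ∘ σ)
    (t := Finset.univ.filter fun g : Fin n → X => cntVec g = cntVec f)
    (by intro σ _; simpa using cntVec_comp f σ)]
  rw [Finset.sum_const_nat]
  intro g hg
  obtain ⟨τ, rfl⟩ := cntVec_exists_perm f g (by simpa using (Finset.mem_filter.1 hg).2.symm)
  have h2 := DomMulAct.stabilizer_card (f := f)
  simp only [Fintype.card_subtype] at h2
  simp only [cntVec]
  rw [← h2]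
  refine Finset.card_bij (fun σ _ => σ * τ⁻¹) ?_ ?_ ?_
  · intro σ hσ
    have hσ' : f ∘ σ = f ∘ τ := by simpa using hσ
    simp only [Finset.mem_filter, Finset.mem_univ, true_and]
    funext i
    have := congrFun hσ' (τ⁻¹ i)
    simpa using this
  · intro a _ b _ h; exact mul_right_cancel h
  · intro σ hσ
    have hσ' : f ∘ σ = f := by simpa using hσ
    refine ⟨σ * τ, ?_, by simp⟩
    simp only [Finset.mem_filter, Finset.mem_univ, true_and]
    funext i
    have := congrFun hσ' (τ i)
    simpa using this

lemma factorial_add_le_aux (k d : ℕ) :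
    (k + d).factorial ≤ k.factorial * (k + d) ^ d := by
  induction d with
  | zero => simp
  | succ d ih =>
    rw [← add_assoc, Nat.factorial_succ, pow_succ, ← mul_assoc, mul_comm (k + d + 1)]
    refine Nat.mul_le_mul_right _ (ih.trans (Nat.mul_le_mul_left _ ?_))
    exact Nat.pow_le_pow_left (by omega) _

lemma fact_pow_le (c k : ℕ) : c.factorial * c ^ k ≤ k.factorial * c ^ c := by
  rcases le_total c k with h | h
  · calc c.factorial * c ^ k = (c.factorial * c ^ (k - c)) * c ^ c := by
          rw [mul_assoc, ← pow_add, Nat.sub_add_cancel h]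
      _ ≤ _ := Nat.mul_le_mul_right _ (Nat.factorial_mul_pow_sub_le_factorial h)
  · have h3 : c.factorial ≤ k.factorial * c ^ (c - k) := by
      obtain ⟨d, rfl⟩ := Nat.exists_eq_add_of_le h
      rw [Nat.add_sub_cancel_left]
      exact factorial_add_le_aux k d
    calc c.factorial * c ^ k ≤ (k.factorial * c ^ (c - k)) * c ^ k := Nat.mul_le_mul_right _ h3
      _ = _ := by rw [mul_assoc, ← pow_add, Nat.sub_add_cancel h]

lemma prod_cnt {X : Type*} [Fintype X] [DecidableEq X] {n : ℕ} (c : X → ℕ) (g : Fin n → X) :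
    ∏ i, c (g i) = ∏ a, c a ^ cntVec g a := by
  rw [← Finset.prod_fiberwise' _ g c]
  simp [cntVec]

lemma sum_cnt {X : Type*} [Fintype X] [DecidableEq X] {n : ℕ} (f : Fin n → X) :
    ∑ a, cntVec f a = n := by
  have := Finset.card_eq_sum_card_fiberwise (f := f) (s := Finset.univ) (t := Finset.univ)
    (by intro _ _; simp)
  simpa [cntVec] using this.symm

lemma total {X : Type*} [Fintype X] [DecidableEq X] {n : ℕ} (f : Fin n → X) :
    ∑ g : Fin n → X, ∏ a, cntVec f a ^ cntVec g a = n ^ n := by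
  have := Finset.sum_pow' (Finset.univ : Finset X) (cntVec f) n
  rw [sum_cnt] at this
  rw [this]
  simp [prod_cnt]

lemma upperN {X : Type*} [Fintype X] [DecidableEq X] {n : ℕ} (f : Fin n → X) :
    (Finset.univ.filter fun g : Fin n → X => cntVec g = cntVec f).card *
      ∏ a, cntVec f a ^ cntVec f a ≤ n ^ n := by
  rw [← total f, ← Finset.sum_const_nat (f := fun g => ∏ a, cntVec f a ^ cntVec g a)]
  · exact Finset.sum_le_sum_of_subset (Finset.filter_subset _ _)
  · intro g hg
    rw [(Finset.mem_filter.1 hg).2]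

lemma term_le {X : Type*} [Fintype X] [DecidableEq X] {n : ℕ} (f g : Fin n → X) :
    (Finset.univ.filter fun h : Fin n → X => cntVec h = cntVec g).card *
      ∏ a, cntVec f a ^ cntVec g a ≤
    (Finset.univ.filter fun h : Fin n → X => cntVec h = cntVec f).card *
      ∏ a, cntVec f a ^ cntVec f a := by
  have hp : 0 < ∏ a, (cntVec g a).factorial :=
    Finset.prod_pos fun a _ => Nat.factorial_pos _
  have h1 := card_cnt_mul f
  have h2 := card_cnt_mul g
  have h3 : (∏ a, (cntVec f a).factorial) * ∏ a, cntVec f a ^ cntVec g a ≤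
      (∏ a, (cntVec g a).factorial) * ∏ a, cntVec f a ^ cntVec f a := by
    rw [← Finset.prod_mul_distrib, ← Finset.prod_mul_distrib]
    exact Finset.prod_le_prod' fun a _ => fact_pow_le _ _
  refine Nat.le_of_mul_le_mul_right ?_ hp
  rw [mul_right_comm, h2, ← h1, mul_assoc, mul_assoc]
  refine Nat.mul_le_mul_left _ ?_
  rw [mul_comm (∏ a, cntVec f a ^ cntVec f a)]
  exact h3

lemma lowerN {X : Type*} [Fintype X] [DecidableEq X] {n : ℕ} (f : Fin n → X) :
    n ^ n ≤ (n + 1) ^ Fintype.card X *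
      ((Finset.univ.filter fun g : Fin n → X => cntVec g = cntVec f).card *
      ∏ a, cntVec f a ^ cntVec f a) := by
  have hm : ∀ g ∈ (Finset.univ : Finset (Fin n → X)),
      cntVec g ∈ Fintype.piFinset fun _ : X => Finset.range (n + 1) := by
    intro g _
    rw [Fintype.mem_piFinset]
    intro a
    have : cntVec g a ≤ n := by
      simpa [cntVec] using Finset.card_filter_le (Finset.univ : Finset (Fin n)) (fun i => g i = a)
    exact Finset.mem_range.2 (by omega)
  rw [← total f, ← Finset.sum_fiberwise_of_maps_to hm]
  have hc : (Fintype.piFinset fun _ : X => Finset.range (n + 1)).card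
      = (n + 1) ^ Fintype.card X := by simp
  rw [← hc, ← smul_eq_mul (Finset.card _)]
  refine Finset.sum_le_card_nsmul _ _ _ ?_
  intro k _
  by_cases hk : ∃ g : Fin n → X, cntVec g = k
  · obtain ⟨g, rfl⟩ := hk
    refine le_trans (le_of_eq ?_) (term_le f g)
    refine Finset.sum_const_nat ?_
    intro h hh
    rw [(Finset.mem_filter.1 hh).2]
  · rw [Finset.filter_false_of_mem]
    · simp
    · intro g _ hg; exact hk ⟨g, hg⟩

lemma typeOf_eq_iff {X : Type*} [Fintype X] [DecidableEq X] {n : ℕ} (f g : Fin n → X) :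
    typeOf n g = typeOf n f ↔ cntVec g = cntVec f := by
  constructor
  · intro h
    funext a
    have := congrFun h a
    simp only [typeOf] at this
    rcases Nat.eq_zero_or_pos n with h0 | h0
    · subst h0; simp [cntVec]
    · have hn : (n : ℝ) ≠ 0 := by positivity
      rw [div_left_inj' hn] at this
      exact_mod_cast this
  · intro h
    funext a
    have := congrFun h a
    simp only [cntVec] at this
    simp only [typeOf, this]

lemma entropy_eq {X : Type*} [Fintype X] [DecidableEq X] {n : ℕ} (f : Fin n → X) :
    (2 : ℝ) ^ ((n : ℝ) * shannonEntropy (typeOf n f)) *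
      ((∏ a, cntVec f a ^ cntVec f a : ℕ) : ℝ) = (n : ℝ) ^ n := by
  rcases Nat.eq_zero_or_pos n with h0 | h0
  · subst h0; simp [cntVec]
  have hn : (0 : ℝ) < n := by positivity
  have h1 : (n : ℝ) * shannonEntropy (typeOf n f) =
      ∑ a, (-(cntVec f a : ℝ) * Real.logb 2 ((cntVec f a : ℝ) / n)) := by
    simp only [shannonEntropy, typeOf]
    rw [← Finset.sum_neg_distrib, Finset.mul_sum]
    refine Finset.sum_congr rfl fun a _ => ?_
    simp only [cntVec]
    field_simp
  have h2 : (n : ℝ) ^ n = ∏ a, (n : ℝ) ^ cntVec f a := by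
    rw [Finset.prod_pow_eq_pow_sum, sum_cnt]
  rw [h1, h2, Real.rpow_sum_of_pos (by norm_num), Nat.cast_prod, ← Finset.prod_mul_distrib]
  refine Finset.prod_congr rfl fun a _ => ?_
  rcases Nat.eq_zero_or_pos (cntVec f a) with hc | hc
  · simp [hc]
  · have hc' : (0 : ℝ) < cntVec f a := by positivity
    rw [mul_comm (-(cntVec f a : ℝ)), Real.rpow_mul (by norm_num),
      Real.rpow_logb (by norm_num) (by norm_num) (by positivity),
      Real.rpow_neg (by positivity), Real.rpow_natCast]
    push_cast
    rw [div_pow]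
    field_simp

/-- Bounds on the cardinality of a type class:
`(n+1)^{-|X|} 2^{n H(t)} ≤ |T_n^t| ≤ 2^{n H(t)}`. -/
theorem type_class_card_bounds {X : Type*} [Fintype X] [DecidableEq X] (n : ℕ) (t : X → ℝ)
    (ht : ∃ xs : Fin n → X, typeOf n xs = t) :
    ((n : ℝ) + 1) ^ (-(Fintype.card X : ℝ)) * 2 ^ ((n : ℝ) * shannonEntropy t) ≤
        ({xs : Fin n → X | typeOf n xs = t}.ncard : ℝ) ∧
      ({xs : Fin n → X | typeOf n xs = t}.ncard : ℝ) ≤ 2 ^ ((n : ℝ) * shannonEntropy t) := by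
  obtain ⟨f, rfl⟩ := ht
  have hset : {xs : Fin n → X | typeOf n xs = typeOf n f} =
      ((Finset.univ.filter fun g : Fin n → X => cntVec g = cntVec f : Finset (Fin n → X)) :
        Set (Fin n → X)) := by
    ext g
    simp [typeOf_eq_iff]
  rw [hset, Set.ncard_coe_finset]
  have hE := entropy_eq f
  have hU := upperN f
  have hL := lowerN f
  have hP : 0 < ∏ a, cntVec f a ^ cntVec f a := by
    refine Finset.prod_pos fun a _ => ?_
    rcases Nat.eq_zero_or_pos (cntVec f a) with hc | hc
    · simp [hc]
    · positivity
  generalize (∏ a, cntVec f a ^ cntVec f a) = P at *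
  generalize (Finset.univ.filter fun g : Fin n → X => cntVec g = cntVec f).card = N at *
  have hP' : (0 : ℝ) < P := by exact_mod_cast hP
  have hU' : (N : ℝ) * P ≤ (n : ℝ) ^ n := by exact_mod_cast hU
  have hL' : (n : ℝ) ^ n ≤ ((n : ℝ) + 1) ^ Fintype.card X * (N * P) := by exact_mod_cast hL
  rw [← hE] at hU' hL'
  constructor
  · rw [Real.rpow_neg (by positivity), Real.rpow_natCast, inv_mul_le_iff₀ (by positivity)]
    rw [← mul_assoc] at hL'
    exact le_of_mul_le_mul_right hL' hP'
  · exact le_of_mul_le_mul_right hU' hP'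
end

section
/- Let {p(x,a)} be a joint probability distribution on a finite product R × A with marginal p(x) on R and conditionals p(·|x) on A. Then for r ≥ 0, sup_{1/2 ≤ α ≤ 1} inf_{t ∈ Q(R)} [ 2 D(t‖p_R) + ((1−α)/α)·(r − E_{x∼t} H_α(p(·|x))) ] = inf_{t ∈ Q(R)} inf_{τ} [ 2 D(t‖p_R) + E_{x∼t} D(τ^x‖p(·|x)) + max{0, r − E_{x∼t} H(τ^x)} ], where the inner infimum is over families τ = (τ^x)_{x∈R} of probability distributions on A with supp(τ^x) ⊆ supp(p(·|x)) for all x. -/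
/-- `p` is a probability distribution on the finite set `X`. -/
def IsProb {X : Type*} [Fintype X] (p : X → ℝ) : Prop :=
  (∀ x, 0 ≤ p x) ∧ ∑ x, p x = 1

/-- Base-2 relative entropy (Kullback–Leibler divergence). -/
noncomputable def Dkl {X : Type*} [Fintype X] (t p : X → ℝ) : ℝ :=
  ∑ x, t x * Real.logb 2 (t x / p x)

/-- Rényi entropy `H_α` for `α ∈ [0,1)`, extended by the Shannon entropy at `α = 1`. -/
noncomputable def renyiEntropy {X : Type*} [Fintype X] (α : ℝ) (p : X → ℝ) : ℝ :=
  if α = 1 then shannonEntropy p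
  else (1 / (1 - α)) * Real.logb 2 (∑ x, if p x = 0 then 0 else p x ^ α)

open Finset in
theorem pa_gibbs {X : Type*} [Fintype X] (t m : X → ℝ) (ht : IsProb t) (hm : ∀ x, 0 ≤ m x)
    (hM : 0 < ∑ x, m x) (h0 : ∀ x, m x = 0 → t x = 0) :
    -Real.logb 2 (∑ x, m x) ≤ ∑ x, t x * Real.logb 2 (t x / m x) := by
  set M := ∑ x, m x with hMdef
  have hl2 : 0 < Real.log 2 := Real.log_pos (by norm_num)
  have key : ∀ x, t x - m x / M ≤ t x * Real.log (t x / m x) + t x * Real.log M := by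
    intro x
    rcases (ht.1 x).eq_or_lt with h | h
    · rw [← h]
      have : 0 ≤ m x / M := div_nonneg (hm x) hM.le
      simp; exact this
    · have hmx : 0 < m x := lt_of_le_of_ne (hm x) (fun hh => h.ne' (h0 x hh.symm))
      have h1 := Real.one_sub_inv_le_log_of_pos (show 0 < t x / m x * M by positivity)
      rw [Real.log_mul (by positivity) hM.ne'] at h1
      have h2 := mul_le_mul_of_nonneg_left h1 h.le
      have h3 : t x * (1 - (t x / m x * M)⁻¹) = t x - m x / M := by
        field_simp
      rw [h3] at h2
      linarith
  have hs := Finset.sum_le_sum (fun x (_ : x ∈ Finset.univ) => key x)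
  rw [Finset.sum_sub_distrib, Finset.sum_add_distrib, ← Finset.sum_div, ← Finset.sum_mul, ht.2,
    ← hMdef, div_self hM.ne'] at hs
  have e : ∑ x, t x * Real.logb 2 (t x / m x) = (∑ x, t x * Real.log (t x / m x)) / Real.log 2 := by
    rw [Finset.sum_div]; exact Finset.sum_congr rfl fun x _ => by rw [Real.logb]; ring
  rw [e, Real.logb, ← neg_div]
  gcongr
  linarith

theorem pa_gibbs_eq {X : Type*} [Fintype X] (m : X → ℝ)
    (hM : 0 < ∑ x, m x) :
    ∑ x, (m x / ∑ y, m y) * Real.logb 2 ((m x / ∑ y, m y) / m x) = -Real.logb 2 (∑ x, m x) := by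
  set M := ∑ x, m x with hMdef
  have : ∀ x, (m x / M) * Real.logb 2 ((m x / M) / m x) = (m x / M) * (-Real.logb 2 M) := by
    intro x
    by_cases h : m x = 0
    · simp [h]
    · rw [← Real.logb_inv]; congr 2; field_simp
  rw [Finset.sum_congr rfl fun x _ => this x, ← Finset.sum_mul, ← Finset.sum_div, ← hMdef,
    div_self hM.ne', one_mul]

theorem pa_isProb {X : Type*} [Fintype X] (m : X → ℝ) (hm : ∀ x, 0 ≤ m x)
    (hM : 0 < ∑ x, m x) : IsProb (fun x => m x / ∑ y, m y) :=
  ⟨fun x => div_nonneg (hm x) hM.le, by rw [← Finset.sum_div, div_self hM.ne']⟩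

/-- tilted weights -/
noncomputable def paM {A : Type*} (q : A → ℝ) (s : ℝ) (a : A) : ℝ :=
  if q a = 0 then 0 else q a ^ (1 / (1 + s))

theorem paM_nonneg {A : Type*} [Fintype A] {q : A → ℝ} (hq : IsProb q) (s : ℝ) (a : A) :
    0 ≤ paM q s a := by
  unfold paM; split_ifs
  · exact le_rfl
  · exact Real.rpow_nonneg (hq.1 a) _

theorem paM_zero_iff {A : Type*} [Fintype A] {q : A → ℝ} (hq : IsProb q) (s : ℝ) (a : A) :
    paM q s a = 0 ↔ q a = 0 := by
  unfold paM; split_ifs with h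
  · simp [h]
  · have : 0 < q a := lt_of_le_of_ne (hq.1 a) (Ne.symm h)
    exact ⟨fun h' => absurd h' (Real.rpow_pos_of_pos this _).ne', fun h' => absurd h' h⟩

theorem paM_sum_pos {A : Type*} [Fintype A] {q : A → ℝ} (hq : IsProb q) (s : ℝ) :
    0 < ∑ a, paM q s a := by
  refine lt_of_le_of_ne (Finset.sum_nonneg fun a _ => paM_nonneg hq s a) fun h => ?_
  have h1 := (Finset.sum_eq_zero_iff_of_nonneg fun a _ => paM_nonneg hq s a).1 h.symm
  have h2 : ∑ a, q a = 0 := Finset.sum_eq_zero fun a ha => (paM_zero_iff hq s a).1 (h1 a ha)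
  rw [hq.2] at h2; exact one_ne_zero h2

theorem pa_inner_id {A : Type*} [Fintype A] {q : A → ℝ} (hq : IsProb q) {s : ℝ} (hs : 0 ≤ s)
    (τ : A → ℝ) (h0 : ∀ a, q a = 0 → τ a = 0) :
    Dkl τ q - s * shannonEntropy τ = (1 + s) * ∑ a, τ a * Real.logb 2 (τ a / paM q s a) := by
  unfold Dkl shannonEntropy
  rw [mul_neg, sub_neg_eq_add, Finset.mul_sum, Finset.mul_sum, ← Finset.sum_add_distrib]
  refine Finset.sum_congr rfl fun a _ => ?_
  by_cases h : τ a = 0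
  · simp [h]
  · have hqa : q a ≠ 0 := fun hh => h (h0 a hh)
    have hqp : 0 < q a := lt_of_le_of_ne (hq.1 a) (Ne.symm hqa)
    rw [paM, if_neg hqa, Real.logb_div h hqa, Real.logb_div h (Real.rpow_pos_of_pos hqp _).ne',
      Real.logb_rpow_eq_mul_logb_of_pos hqp]
    have : 1 + s ≠ 0 := by positivity
    field_simp
    ring

theorem pa_renyi {A : Type*} [Fintype A] {q : A → ℝ} (hq : IsProb q) {s : ℝ} (hs : 0 ≤ s) :
    s * renyiEntropy (1 / (1 + s)) q = (1 + s) * Real.logb 2 (∑ a, paM q s a) := by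
  rcases hs.eq_or_lt with h | h
  · subst h
    have : ∀ a, paM q 0 a = q a := by
      intro a; unfold paM; split_ifs with h
      · exact h.symm
      · simp
    simp [this, hq.2]
  · have h1 : 1 / (1 + s) ≠ 1 := by
      rw [Ne, div_eq_one_iff_eq (by positivity)]; linarith
    rw [renyiEntropy, if_neg h1]
    have : 1 - 1 / (1 + s) = s / (1 + s) := by field_simp; ring
    rw [this]
    unfold paM
    field_simp

/-- outer weights -/
noncomputable def paN {R A : Type*} [Fintype A] (u : R → ℝ) (q : R → A → ℝ) (s : ℝ) (x : R) : ℝ :=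
  u x * (∑ a, paM (q x) s a) ^ ((1 + s) / 2)

theorem pa_outer_id {R A : Type*} [Fintype R] [Fintype A] {u : R → ℝ} {q : R → A → ℝ}
    (hq : ∀ x, IsProb (q x)) (s : ℝ)
    (t : R → ℝ) (h0 : ∀ x, u x = 0 → t x = 0) :
    2 * Dkl t u - ∑ x, t x * ((1 + s) * Real.logb 2 (∑ a, paM (q x) s a)) =
      2 * ∑ x, t x * Real.logb 2 (t x / paN u q s x) := by
  unfold Dkl
  rw [Finset.mul_sum, Finset.mul_sum, ← Finset.sum_sub_distrib]
  refine Finset.sum_congr rfl fun x _ => ?_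
  by_cases h : t x = 0
  · simp [h]
  · have hu : u x ≠ 0 := fun hh => h (h0 x hh)
    have hZ := paM_sum_pos (hq x) s
    have hZ' := Real.rpow_pos_of_pos hZ ((1 + s) / 2)
    rw [paN, Real.logb_div h hu, Real.logb_div h (mul_ne_zero hu hZ'.ne'),
      Real.logb_mul hu hZ'.ne', Real.logb_rpow_eq_mul_logb_of_pos hZ]
    ring

theorem paN_nonneg {R A : Type*} [Fintype R] [Fintype A] {u : R → ℝ} {q : R → A → ℝ}
    (hu : IsProb u) (hq : ∀ x, IsProb (q x)) (s : ℝ) (x : R) : 0 ≤ paN u q s x :=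
  mul_nonneg (hu.1 x) (Real.rpow_nonneg (paM_sum_pos (hq x) s).le _)

theorem paN_zero_iff {R A : Type*} [Fintype R] [Fintype A] {u : R → ℝ} {q : R → A → ℝ}
    (hq : ∀ x, IsProb (q x)) (s : ℝ) (x : R) : paN u q s x = 0 ↔ u x = 0 := by
  rw [paN, mul_eq_zero, or_iff_left]
  exact (Real.rpow_pos_of_pos (paM_sum_pos (hq x) s) _).ne'

theorem paN_sum_pos {R A : Type*} [Fintype R] [Fintype A] {u : R → ℝ} {q : R → A → ℝ}
    (hu : IsProb u) (hq : ∀ x, IsProb (q x)) (s : ℝ) : 0 < ∑ x, paN u q s x := by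
  refine lt_of_le_of_ne (Finset.sum_nonneg fun a _ => paN_nonneg hu hq s a) fun h => ?_
  have h1 := (Finset.sum_eq_zero_iff_of_nonneg fun a _ => paN_nonneg hu hq s a).1 h.symm
  have h2 : ∑ a, u a = 0 := Finset.sum_eq_zero fun a ha => (paN_zero_iff hq s a).1 (h1 a ha)
  rw [hu.2] at h2; exact one_ne_zero h2

/-- optimal conditional distribution -/
noncomputable def paTau {R A : Type*} [Fintype A] (q : R → A → ℝ) (s : ℝ) (x : R) (a : A) : ℝ :=
  paM (q x) s a / ∑ b, paM (q x) s b

/-- optimal distribution on `R` -/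
noncomputable def paT {R A : Type*} [Fintype R] [Fintype A] (u : R → ℝ) (q : R → A → ℝ) (s : ℝ)
    (x : R) : ℝ :=
  paN u q s x / ∑ y, paN u q s y

/-- optimal conditional entropy -/
noncomputable def paH {R A : Type*} [Fintype R] [Fintype A] (u : R → ℝ) (q : R → A → ℝ)
    (s : ℝ) : ℝ :=
  ∑ x, paT u q s x * shannonEntropy (paTau q s x)

theorem pa_cont {R A : Type*} [Fintype R] [Fintype A] {u : R → ℝ} {q : R → A → ℝ}
    (hu : IsProb u) (hq : ∀ x, IsProb (q x)) : ContinuousOn (paH u q) (Set.Icc 0 1) := by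
  have hM : ∀ x a, ContinuousOn (fun s => paM (q x) s a) (Set.Icc 0 1) := by
    intro x a
    unfold paM
    by_cases h : q x a = 0
    · simp only [h, if_true]; exact continuousOn_const
    · simp only [h, if_false]
      refine ContinuousOn.rpow continuousOn_const ?_ (fun s _ => Or.inl h)
      refine ContinuousOn.div continuousOn_const (by fun_prop) ?_
      intro s hs; have := hs.1; positivity
  have hZ : ∀ x, ContinuousOn (fun s => ∑ a, paM (q x) s a) (Set.Icc 0 1) := fun x =>
    continuousOn_finsetSum _ fun a _ => hM x a
  have hN : ∀ x, ContinuousOn (fun s => paN u q s x) (Set.Icc 0 1) := by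
    intro x
    unfold paN
    refine continuousOn_const.mul ((hZ x).rpow (by fun_prop) fun s _ => Or.inl ?_)
    exact (paM_sum_pos (hq x) s).ne'
  have hT : ∀ x, ContinuousOn (fun s => paT u q s x) (Set.Icc 0 1) := fun x =>
    (hN x).div (continuousOn_finsetSum _ fun y _ => hN y) fun s _ => (paN_sum_pos hu hq s).ne'
  have hTau : ∀ x a, ContinuousOn (fun s => paTau q s x a) (Set.Icc 0 1) := fun x a =>
    (hM x a).div (hZ x) fun s _ => (paM_sum_pos (hq x) s).ne'
  unfold paH
  refine continuousOn_finsetSum _ fun x _ => (hT x).mul ?_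
  unfold shannonEntropy
  refine (continuousOn_finsetSum _ fun a _ => ?_).neg
  have h1 : ContinuousOn (fun s => paTau q s x a * Real.log (paTau q s x a) / Real.log 2)
      (Set.Icc 0 1) :=
    (Real.continuous_mul_log.comp_continuousOn (hTau x a)).div_const _
  refine h1.congr fun s _ => ?_
  simp only [Real.logb]; ring

/-- optimal value at fixed `s` -/
noncomputable def paG {R A : Type*} [Fintype R] [Fintype A] (u : R → ℝ) (q : R → A → ℝ)
    (r s : ℝ) : ℝ := s * r - 2 * Real.logb 2 (∑ x, paN u q s x)

theorem pa_t_le {R A : Type*} [Fintype R] [Fintype A] {u : R → ℝ} {q : R → A → ℝ}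
    (hu : IsProb u) (hq : ∀ x, IsProb (q x)) (r : ℝ) {s : ℝ} (hs : 0 ≤ s)
    (t : R → ℝ) (ht : IsProb t) (h0 : ∀ x, u x = 0 → t x = 0) :
    paG u q r s ≤ 2 * Dkl t u + s * (r - ∑ x, t x * renyiEntropy (1 / (1 + s)) (q x)) := by
  have h1 := pa_gibbs t (paN u q s) ht (paN_nonneg hu hq s) (paN_sum_pos hu hq s)
    (fun x hx => h0 x ((paN_zero_iff hq s x).1 hx))
  have h2 := pa_outer_id hq s t h0
  have h3 : s * ∑ x, t x * renyiEntropy (1 / (1 + s)) (q x) =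
      ∑ x, t x * ((1 + s) * Real.logb 2 (∑ a, paM (q x) s a)) := by
    rw [Finset.mul_sum]
    refine Finset.sum_congr rfl fun x _ => ?_
    rw [← pa_renyi (hq x) hs]; ring
  rw [paG, mul_sub, h3]
  linarith

theorem pa_t_eq {R A : Type*} [Fintype R] [Fintype A] {u : R → ℝ} {q : R → A → ℝ}
    (hu : IsProb u) (hq : ∀ x, IsProb (q x)) (r : ℝ) {s : ℝ} (hs : 0 ≤ s) :
    paG u q r s = 2 * Dkl (paT u q s) u +
      s * (r - ∑ x, paT u q s x * renyiEntropy (1 / (1 + s)) (q x)) := by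
  have h1 := pa_gibbs_eq (paN u q s) (paN_sum_pos hu hq s)
  have h2 := pa_outer_id hq s (paT u q s) (u := u)
    (fun x hx => by rw [paT, (paN_zero_iff hq s x).2 hx, zero_div])
  have h3 : s * ∑ x, paT u q s x * renyiEntropy (1 / (1 + s)) (q x) =
      ∑ x, paT u q s x * ((1 + s) * Real.logb 2 (∑ a, paM (q x) s a)) := by
    rw [Finset.mul_sum]
    refine Finset.sum_congr rfl fun x _ => ?_
    rw [← pa_renyi (hq x) hs]; ring
  rw [paG, mul_sub, h3]
  change ∑ x, paT u q s x * Real.logb 2 (paT u q s x / paN u q s x) = _ at h1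
  linarith

theorem pa_tau_le {A : Type*} [Fintype A] {q : A → ℝ} (hq : IsProb q) {s : ℝ} (hs : 0 ≤ s)
    (τ : A → ℝ) (hτ : IsProb τ) (h0 : ∀ a, q a = 0 → τ a = 0) :
    -(s * renyiEntropy (1 / (1 + s)) q) ≤ Dkl τ q - s * shannonEntropy τ := by
  rw [pa_inner_id hq hs τ h0, pa_renyi hq hs, ← mul_neg]
  refine mul_le_mul_of_nonneg_left ?_ (by positivity)
  exact pa_gibbs τ _ hτ (paM_nonneg hq s) (paM_sum_pos hq s)
    fun a ha => h0 a ((paM_zero_iff hq s a).1 ha)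

theorem pa_tau_eq {R A : Type*} [Fintype A] {q : R → A → ℝ} (hq : ∀ x, IsProb (q x)) {s : ℝ}
    (hs : 0 ≤ s) (x : R) :
    Dkl (paTau q s x) (q x) - s * shannonEntropy (paTau q s x) =
      -(s * renyiEntropy (1 / (1 + s)) (q x)) := by
  rw [pa_inner_id (hq x) hs _ fun a ha => by
    rw [paTau, (paM_zero_iff (hq x) s a).2 ha, zero_div], pa_renyi (hq x) hs, ← mul_neg]
  congr 1
  exact pa_gibbs_eq (paM (q x) s) (paM_sum_pos (hq x) s)

theorem pa_sum_id {R A : Type*} [Fintype R] [Fintype A] (q : R → A → ℝ) (t : R → ℝ)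
    (τ : R → A → ℝ) (s : ℝ) :
    ∑ x, t x * (Dkl (τ x) (q x) - s * shannonEntropy (τ x)) =
      (∑ x, t x * Dkl (τ x) (q x)) - s * ∑ x, t x * shannonEntropy (τ x) := by
  rw [Finset.mul_sum, ← Finset.sum_sub_distrib]
  exact Finset.sum_congr rfl fun x _ => by ring

theorem pa_sum_id' {R A : Type*} [Fintype R] [Fintype A] (q : R → A → ℝ) (t : R → ℝ)
    (s α : ℝ) :
    ∑ x, t x * (-(s * renyiEntropy α (q x))) = -(s * ∑ x, t x * renyiEntropy α (q x)) := by
  rw [Finset.mul_sum, ← Finset.sum_neg_distrib]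
  exact Finset.sum_congr rfl fun x _ => by ring

theorem pa_full_le {R A : Type*} [Fintype R] [Fintype A] {u : R → ℝ} {q : R → A → ℝ}
    (hu : IsProb u) (hq : ∀ x, IsProb (q x)) (r : ℝ) {s : ℝ} (hs : s ∈ Set.Icc (0 : ℝ) 1)
    (t : R → ℝ) (ht : IsProb t) (h0 : ∀ x, u x = 0 → t x = 0)
    (τ : R → A → ℝ) (hτ : ∀ x, IsProb (τ x)) (h1 : ∀ x a, u x ≠ 0 → q x a = 0 → τ x a = 0) :
    paG u q r s ≤ 2 * Dkl t u + (∑ x, t x * Dkl (τ x) (q x)) +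
      max 0 (r - ∑ x, t x * shannonEntropy (τ x)) := by
  have a1 := pa_t_le hu hq r hs.1 t ht h0
  have a2 : ∑ x, t x * (-(s * renyiEntropy (1 / (1 + s)) (q x))) ≤
      ∑ x, t x * (Dkl (τ x) (q x) - s * shannonEntropy (τ x)) := by
    refine Finset.sum_le_sum fun x _ => ?_
    by_cases hx : u x = 0
    · simp [h0 x hx]
    · exact mul_le_mul_of_nonneg_left (pa_tau_le (hq x) hs.1 _ (hτ x) fun a => h1 x a hx) (ht.1 x)
  rw [pa_sum_id, pa_sum_id'] at a2
  have a3 : s * (r - ∑ x, t x * shannonEntropy (τ x)) ≤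
      max 0 (r - ∑ x, t x * shannonEntropy (τ x)) := by
    have := le_max_left 0 (r - ∑ x, t x * shannonEntropy (τ x))
    have := le_max_right 0 (r - ∑ x, t x * shannonEntropy (τ x))
    have := hs.1
    have := hs.2
    nlinarith
  linarith

theorem pa_full_eq {R A : Type*} [Fintype R] [Fintype A] {u : R → ℝ} {q : R → A → ℝ}
    (hu : IsProb u) (hq : ∀ x, IsProb (q x)) (r : ℝ) :
    ∃ s ∈ Set.Icc (0 : ℝ) 1, paG u q r s = 2 * Dkl (paT u q s) u +
      (∑ x, paT u q s x * Dkl (paTau q s x) (q x)) +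
      max 0 (r - ∑ x, paT u q s x * shannonEntropy (paTau q s x)) := by
  have hs : ∃ s ∈ Set.Icc (0 : ℝ) 1, max 0 (r - paH u q s) = s * (r - paH u q s) := by
    by_cases h0 : r ≤ paH u q 0
    · exact ⟨0, by simp, by rw [zero_mul]; exact max_eq_left (by linarith)⟩
    by_cases h1 : paH u q 1 ≤ r
    · exact ⟨1, by simp, by rw [one_mul]; exact max_eq_right (by linarith)⟩
    push Not at h0 h1
    obtain ⟨s, hs, e⟩ := intermediate_value_Icc zero_le_one (pa_cont hu hq) ⟨h0.le, h1.le⟩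
    exact ⟨s, hs, by simp [e]⟩
  obtain ⟨s, hs, e⟩ := hs
  refine ⟨s, hs, ?_⟩
  have a1 := pa_t_eq hu hq r hs.1
  have a2 := pa_sum_id q (paT u q s) (paTau q s) s
  rw [Finset.sum_congr rfl fun x _ => by rw [pa_tau_eq hq hs.1 x], pa_sum_id'] at a2
  change _ = _ + max 0 (r - paH u q s)
  rw [e]
  unfold paH
  linarith

theorem pa_main {R A : Type*} [Fintype R] [Fintype A] {u : R → ℝ} {q : R → A → ℝ}
    (hu : IsProb u) (hq : ∀ x, IsProb (q x)) (r : ℝ) :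
    sSup {v | ∃ α ∈ Set.Icc (1/2 : ℝ) 1,
        v = sInf {w | ∃ t : R → ℝ, IsProb t ∧ (∀ x, u x = 0 → t x = 0) ∧
          w = 2 * Dkl t u + ((1 - α) / α) * (r - ∑ x, t x * renyiEntropy α (q x))}} =
      sInf {w | ∃ t : R → ℝ, IsProb t ∧ (∀ x, u x = 0 → t x = 0) ∧
        ∃ τ : R → A → ℝ, (∀ x, IsProb (τ x)) ∧
          (∀ x a, u x ≠ 0 → q x a = 0 → τ x a = 0) ∧
          w = 2 * Dkl t u + (∑ x, t x * Dkl (τ x) (q x)) +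
            max 0 (r - ∑ x, t x * shannonEntropy (τ x))} := by
  have hT0 : ∀ s x, u x = 0 → paT u q s x = 0 := fun s x hx => by
    rw [paT, (paN_zero_iff hq s x).2 hx, zero_div]
  have hTp : ∀ s, IsProb (paT u q s) := fun s =>
    pa_isProb _ (paN_nonneg hu hq s) (paN_sum_pos hu hq s)
  have hinner : ∀ α ∈ Set.Icc (1/2 : ℝ) 1,
      sInf {w | ∃ t : R → ℝ, IsProb t ∧ (∀ x, u x = 0 → t x = 0) ∧
          w = 2 * Dkl t u + ((1 - α) / α) * (r - ∑ x, t x * renyiEntropy α (q x))} =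
        paG u q r ((1 - α) / α) ∧ (1 - α) / α ∈ Set.Icc (0 : ℝ) 1 := by
    intro α hα
    have hα0 : 0 < α := by linarith [hα.1]
    have hs : (1 - α) / α ∈ Set.Icc (0 : ℝ) 1 :=
      ⟨div_nonneg (by linarith [hα.2]) hα0.le, by rw [div_le_one hα0]; linarith [hα.1]⟩
    have hα' : 1 / (1 + (1 - α) / α) = α := by field_simp; ring
    refine ⟨IsLeast.csInf_eq ⟨⟨paT u q ((1 - α) / α), hTp _, hT0 _, ?_⟩, ?_⟩, hs⟩
    · have := pa_t_eq hu hq r hs.1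
      rwa [hα'] at this
    · rintro w ⟨t, ht, h0, rfl⟩
      have := pa_t_le hu hq r hs.1 t ht h0
      rwa [hα'] at this
  obtain ⟨s, hs, e⟩ := pa_full_eq hu hq r
  have hR : sInf {w | ∃ t : R → ℝ, IsProb t ∧ (∀ x, u x = 0 → t x = 0) ∧
        ∃ τ : R → A → ℝ, (∀ x, IsProb (τ x)) ∧
          (∀ x a, u x ≠ 0 → q x a = 0 → τ x a = 0) ∧
          w = 2 * Dkl t u + (∑ x, t x * Dkl (τ x) (q x)) +
            max 0 (r - ∑ x, t x * shannonEntropy (τ x))} = paG u q r s := by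
    refine IsLeast.csInf_eq ⟨⟨paT u q s, hTp s, hT0 s, paTau q s, fun x => ?_, ?_, e⟩, ?_⟩
    · exact pa_isProb _ (paM_nonneg (hq x) s) (paM_sum_pos (hq x) s)
    · intro x a _ ha
      rw [paTau, (paM_zero_iff (hq x) s a).2 ha, zero_div]
    · rintro w ⟨t, ht, h0, τ, hτ, h1, rfl⟩
      exact pa_full_le hu hq r hs t ht h0 τ hτ h1
  rw [hR]
  refine IsGreatest.csSup_eq ⟨⟨1 / (1 + s), ?_, ?_⟩, ?_⟩
  · have := hs.1
    have := hs.2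
    constructor
    · apply one_div_le_one_div_of_le <;> linarith
    · rw [div_le_one (by linarith)]; linarith
  · have h1 : 1 / (1 + s) ∈ Set.Icc (1/2 : ℝ) 1 := by
      have := hs.1
      have := hs.2
      constructor
      · apply one_div_le_one_div_of_le <;> linarith
      · rw [div_le_one (by linarith)]; linarith
    rw [(hinner _ h1).1]
    have : 1 + s ≠ 0 := by linarith [hs.1]
    congr 1
    field_simp
    ring
  · rintro v ⟨α, hα, rfl⟩
    rw [(hinner α hα).1, e]
    refine pa_full_le hu hq r (hinner α hα).2 _ (hTp s) (hT0 s) _ (fun x => ?_) ?_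
    · exact pa_isProb _ (paM_nonneg (hq x) s) (paM_sum_pos (hq x) s)
    · intro x a _ ha
      rw [paTau, (paM_zero_iff (hq x) s a).2 ha, zero_div]

/-- Variational expression for the strong converse exponent of classical privacy amplification:
`sup_{1/2≤α≤1} inf_t [2D(t‖p_R) + ((1-α)/α)(r - E_{x∼t} H_α(p(·|x)))]`
`  = inf_t inf_τ [2D(t‖p_R) + E_{x∼t} D(τ^x‖p(·|x)) + max{0, r - E_{x∼t} H(τ^x)}]`. -/
theorem privacy_amplification_variational {R A : Type*} [Fintype R] [Fintype A]
    (p : R × A → ℝ) (hp : IsProb p) (r : ℝ) (hr : 0 ≤ r)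
    (pR : R → ℝ) (hpR : pR = fun x => ∑ a, p (x, a))
    (pc : R → A → ℝ) (hpc : pc = fun x a => p (x, a) / pR x) :
    sSup {v | ∃ α ∈ Set.Icc (1/2 : ℝ) 1,
        v = sInf {w | ∃ t : R → ℝ, IsProb t ∧ (∀ x, pR x = 0 → t x = 0) ∧
          w = 2 * Dkl t pR + ((1 - α) / α) * (r - ∑ x, t x * renyiEntropy α (pc x))}} =
      sInf {w | ∃ t : R → ℝ, IsProb t ∧ (∀ x, pR x = 0 → t x = 0) ∧
        ∃ τ : R → A → ℝ, (∀ x, IsProb (τ x)) ∧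
          (∀ x a, pR x ≠ 0 → pc x a = 0 → τ x a = 0) ∧
          w = 2 * Dkl t pR + (∑ x, t x * Dkl (τ x) (pc x)) +
            max 0 (r - ∑ x, t x * shannonEntropy (τ x))} := by
  classical
  have hpR0 : ∀ x, 0 ≤ pR x := fun x => by
    rw [hpR]; exact Finset.sum_nonneg fun a _ => hp.1 _
  have hu : IsProb pR := ⟨hpR0, by rw [hpR, ← hp.2, Fintype.sum_prod_type]⟩
  have hne : Nonempty A := by
    by_contra h
    rw [not_nonempty_iff] at h
    have := hp.2
    simp at this
  set q : R → A → ℝ := fun x a => if pR x = 0 then 1 / (Fintype.card A : ℝ) else pc x a with hqdef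
  have hqe : ∀ x, pR x ≠ 0 → q x = pc x := fun x hx => by
    funext a; simp [hqdef, hx]
  have hq : ∀ x, IsProb (q x) := by
    intro x
    by_cases hx : pR x = 0
    · refine ⟨fun a => ?_, ?_⟩
      · simp only [hqdef, hx, if_true]; positivity
      · simp [hqdef, hx]
    · rw [hqe x hx, hpc]
      refine ⟨fun a => div_nonneg (hp.1 _) (hpR0 x), ?_⟩
      rw [← Finset.sum_div]
      have : ∑ a, p (x, a) = pR x := by rw [hpR]
      rw [this, div_self hx]
  have e1 : ∀ (t : R → ℝ) (α : ℝ), (∀ x, pR x = 0 → t x = 0) →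
      ∑ x, t x * renyiEntropy α (pc x) = ∑ x, t x * renyiEntropy α (q x) := by
    intro t α h0
    refine Finset.sum_congr rfl fun x _ => ?_
    by_cases hx : pR x = 0
    · simp [h0 x hx]
    · rw [hqe x hx]
  have e2 : ∀ (t : R → ℝ) (τ : R → A → ℝ), (∀ x, pR x = 0 → t x = 0) →
      ∑ x, t x * Dkl (τ x) (pc x) = ∑ x, t x * Dkl (τ x) (q x) := by
    intro t τ h0
    refine Finset.sum_congr rfl fun x _ => ?_
    by_cases hx : pR x = 0
    · simp [h0 x hx]
    · rw [hqe x hx]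
  have e3 : ∀ τ : R → A → ℝ, (∀ x a, pR x ≠ 0 → pc x a = 0 → τ x a = 0) ↔
      (∀ x a, pR x ≠ 0 → q x a = 0 → τ x a = 0) := by
    intro τ
    refine forall_congr' fun x => forall_congr' fun a => forall_congr' fun hx => ?_
    rw [hqe x hx]
  refine Eq.trans ?_ ((pa_main hu hq r).trans ?_)
  · congr 1
    ext v
    refine exists_congr fun α => and_congr_right fun _ => ?_
    suffices h : ∀ S T : Set ℝ, S = T → (v = sInf S ↔ v = sInf T) by
      apply h
      ext w
      refine exists_congr fun t => and_congr_right fun _ => and_congr_right fun h0 => ?_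
      rw [e1 t α h0]
    rintro S T rfl
    rfl
  · congr 1
    ext w
    refine exists_congr fun t => and_congr_right fun _ => and_congr_right fun h0 =>
      exists_congr fun τ => and_congr_right fun _ => ?_
    rw [e2 t τ h0, e3 τ]
end

section
/- (Strong converse exponent of classical data compression): Let p be a probability distribution on a finite alphabet X and 0 ≤ r < H(p). Define P_s(n,r) as the maximum over pairs of functions f : X^n → {0,1}^{⌈nr⌉}, g : {0,1}^{⌈nr⌉} → X^n of the probability ∑_{x^n : g(f(x^n)) = x^n} p^n(x^n). Then lim_{n→∞} (−1/n) log₂ P_s(n,r) = sup_{β > 1} ((β−1)/β)·(H_β(p) − r), where H_β(p) = (1/(1−β)) log₂ ∑_x p(x)^β. -/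
/-- Weighted sum of second moments over product space. -/
lemma sc_moments {X : Type*} [Fintype X] (q : X → ℝ) (ψ : X → ℝ)
    (hq1 : ∑ x, q x = 1) (hψ : ∑ x, q x * ψ x = 0) (n : ℕ) :
    ∑ xs : Fin n → X, (∏ i, q (xs i)) * (∑ i, ψ (xs i)) = 0 ∧
    ∑ xs : Fin n → X, (∏ i, q (xs i)) * (∑ i, ψ (xs i)) ^ 2 = n * ∑ x, q x * ψ x ^ 2 := by
  induction n with
  | zero => simp
  | succ n ih =>
    obtain ⟨ih1, ih2⟩ := ih
    have h0 : ∑ xs : Fin n → X, (∏ i, q (xs i)) = 1 := by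
      rw [← Fintype.sum_pow, hq1, one_pow]
    have key : ∀ F : (Fin (n+1) → X) → ℝ,
        ∑ xs, F xs = ∑ x : X, ∑ xs : Fin n → X, F (Fin.cons x xs) := by
      intro F
      rw [← Fintype.sum_prod_type']
      exact (Fintype.sum_equiv (Fin.consEquiv (fun _ => X)) _ _ (fun _ => rfl)).symm
    constructor
    · rw [key]
      simp only [Fin.prod_univ_succ, Fin.sum_univ_succ, Fin.cons_zero, Fin.cons_succ]
      have : ∀ x : X, ∑ xs : Fin n → X, q x * (∏ i, q (xs i)) * (ψ x + ∑ i, ψ (xs i))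
          = q x * ψ x := by
        intro x
        calc _ = q x * ψ x * (∑ xs : Fin n → X, (∏ i, q (xs i)))
              + q x * ∑ xs : Fin n → X, (∏ i, q (xs i)) * (∑ i, ψ (xs i)) := by
              rw [Finset.mul_sum, Finset.mul_sum, ← Finset.sum_add_distrib]
              exact Finset.sum_congr rfl (fun _ _ => by ring)
          _ = _ := by rw [h0, ih1]; ring
      simp only [this, hψ]
    · rw [key]
      simp only [Fin.prod_univ_succ, Fin.sum_univ_succ, Fin.cons_zero, Fin.cons_succ]
      have : ∀ x : X, ∑ xs : Fin n → X, q x * (∏ i, q (xs i)) * (ψ x + ∑ i, ψ (xs i)) ^ 2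
          = q x * ψ x ^ 2 + q x * (n * ∑ x, q x * ψ x ^ 2) := by
        intro x
        calc _ = q x * ψ x ^ 2 * (∑ xs : Fin n → X, (∏ i, q (xs i)))
              + 2 * q x * ψ x * (∑ xs : Fin n → X, (∏ i, q (xs i)) * (∑ i, ψ (xs i)))
              + q x * ∑ xs : Fin n → X, (∏ i, q (xs i)) * (∑ i, ψ (xs i)) ^ 2 := by
              rw [Finset.mul_sum, Finset.mul_sum, Finset.mul_sum, ← Finset.sum_add_distrib,
                ← Finset.sum_add_distrib]
              exact Finset.sum_congr rfl (fun _ _ => by ring)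
          _ = _ := by rw [h0, ih1, ih2]; ring
      simp only [this]
      rw [Finset.sum_add_distrib, ← Finset.sum_mul, hq1]
      push_cast; ring

lemma sc_cheb {X : Type*} [Fintype X] (q : X → ℝ) (φ : X → ℝ) (hq0 : ∀ x, 0 ≤ q x)
    (hq1 : ∑ x, q x = 1) (a : ℝ) (ha : ∑ x, q x * φ x = a) (δ : ℝ) (hδ : 0 < δ) :
    ∀ᶠ n : ℕ in Filter.atTop, ∀ T : Finset (Fin n → X),
      (∀ xs, (∀ i, q (xs i) ≠ 0) → |∑ i, φ (xs i) - n * a| ≤ n * δ → xs ∈ T) →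
      1 / 2 ≤ ∑ xs ∈ T, ∏ i, q (xs i) := by
  classical
  set V := ∑ x, q x * (φ x - a) ^ 2 with hV
  have hV0 : 0 ≤ V := Finset.sum_nonneg fun x _ => mul_nonneg (hq0 x) (sq_nonneg _)
  filter_upwards [Filter.eventually_ge_atTop (⌈2 * V / δ ^ 2⌉₊ + 1)] with n hn T hT
  have hn1 : (2 * V / δ ^ 2) + 1 ≤ n := by
    have := Nat.le_ceil (2 * V / δ ^ 2)
    have h2 : ((⌈2 * V / δ ^ 2⌉₊ + 1 : ℕ) : ℝ) ≤ n := by exact_mod_cast hn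
    push_cast at h2; linarith
  have hn2 : 2 * V ≤ n * δ ^ 2 := by
    have : 2 * V / δ ^ 2 ≤ n := by linarith
    rwa [div_le_iff₀ (by positivity)] at this
  have hnpos : (0:ℝ) < n := by
    have : 0 ≤ 2 * V / δ ^ 2 := by positivity
    linarith
  have hψ : ∑ x, q x * (φ x - a) = 0 := by
    simp only [mul_sub, Finset.sum_sub_distrib, ← Finset.sum_mul, hq1, ha]; ring
  have hm := (sc_moments q (fun x => φ x - a) hq1 hψ n).2
  have h0 : ∑ xs : Fin n → X, (∏ i, q (xs i)) = 1 := by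
      rw [← Fintype.sum_pow, hq1, one_pow]
  have hw : ∀ xs : Fin n → X, 0 ≤ ∏ i, q (xs i) := fun xs => Finset.prod_nonneg fun i _ => hq0 _
  have hbad : ∑ xs ∈ Tᶜ, (∏ i, q (xs i)) * (n * δ) ^ 2 ≤ n * V := by
    rw [← hm]
    refine le_trans (Finset.sum_le_sum (fun xs hxs => ?_)) (Finset.sum_le_sum_of_subset_of_nonneg (Finset.subset_univ Tᶜ) (fun xs _ _ => mul_nonneg (hw xs) (sq_nonneg _)))
    by_cases hz : ∀ i, q (xs i) ≠ 0
    · have h1 : ¬ |∑ i, φ (xs i) - n * a| ≤ n * δ := fun h =>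
        (Finset.mem_compl.mp hxs) (hT xs hz h)
      push Not at h1
      apply mul_le_mul_of_nonneg_left _ (hw xs)
      have : ∑ i, (φ (xs i) - a) = ∑ i, φ (xs i) - n * a := by simp
      rw [this, ← sq_abs (∑ i, φ (xs i) - n * a)]
      exact pow_le_pow_left₀ (by positivity) h1.le 2
    · push Not at hz
      obtain ⟨i, hi⟩ := hz
      rw [Finset.prod_eq_zero (Finset.mem_univ i) hi]; simp
  rw [← Finset.sum_mul] at hbad
  have hs : ∑ xs ∈ T, ∏ i, q (xs i) + ∑ xs ∈ Tᶜ, ∏ i, q (xs i) = 1 := by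
    rw [Finset.sum_add_sum_compl, h0]
  set B := ∑ xs ∈ Tᶜ, ∏ i, q (xs i)
  have : B ≤ 1 / 2 := by
    by_contra hB
    push Not at hB
    have h3 : (1/2) * (n * δ) ^ 2 < B * (n * δ) ^ 2 := by
      apply mul_lt_mul_of_pos_right hB; positivity
    have h4 : n * (2 * V) ≤ n * (n * δ ^ 2) := mul_le_mul_of_nonneg_left hn2 hnpos.le
    nlinarith
  linarith

lemma sc_holder {X : Type*} [Fintype X] (p : X → ℝ) (hp : ∀ x, 0 ≤ p x) (β : ℝ) (hβ : 1 < β)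
    (n : ℕ) (A : Finset (Fin n → X)) :
    ∑ xs ∈ A, ∏ i, p (xs i) ≤ (A.card : ℝ) ^ ((β - 1) / β) * ((∑ x, p x ^ β) ^ n) ^ (1 / β) := by
  have hc : (Real.conjExponent β).HolderConjugate β := (Real.HolderConjugate.conjExponent hβ).symm
  have h := Real.inner_le_Lp_mul_Lq_of_nonneg A hc (f := fun _ => 1)
    (g := fun xs => ∏ i, p (xs i)) (fun _ _ => zero_le_one)
    (fun xs _ => Finset.prod_nonneg fun i _ => hp _)
  simp only [one_mul, Real.one_rpow, Finset.sum_const, nsmul_eq_mul, mul_one] at h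
  refine h.trans ?_
  have e : 1 / Real.conjExponent β = (β - 1) / β := by
    rw [Real.conjExponent]; simp
  rw [e]
  apply mul_le_mul_of_nonneg_left _ (by positivity)
  apply Real.rpow_le_rpow _ _ (by positivity)
  · exact Finset.sum_nonneg fun xs _ => Real.rpow_nonneg (Finset.prod_nonneg fun i _ => hp _) _
  · rw [Fintype.sum_pow]
    refine le_trans (Finset.sum_le_sum_of_subset_of_nonneg (Finset.subset_univ A) ?_) ?_
    · intro xs _ _
      exact Real.rpow_nonneg (Finset.prod_nonneg fun i _ => hp _) _
    · apply le_of_eq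
      apply Finset.sum_congr rfl
      intro xs _
      rw [Real.finsetProd_rpow _ _ (fun i _ => hp _)]

lemma sc_code_card {Y : Type*} [Fintype Y] [DecidableEq Y] (k : ℕ) (f : Y → (Fin k → Bool))
    (g : (Fin k → Bool) → Y) :
    (Finset.univ.filter (fun y => g (f y) = y)).card ≤ 2 ^ k := by
  have : Fintype.card (Fin k → Bool) = 2 ^ k := by simp
  rw [← this, ← Finset.card_univ]
  apply Finset.card_le_card_of_injOn f (fun _ _ => Finset.mem_coe.mpr (Finset.mem_univ _))
  intro x hx y hy hxy
  simp at hx hy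
  rw [← hx, ← hy, hxy]

lemma sc_code_exists {Y : Type*} [Nonempty Y] [DecidableEq Y] (k : ℕ) (A : Finset Y)
    (hA : A.card ≤ 2 ^ k) : ∃ (f : Y → (Fin k → Bool)) (g : (Fin k → Bool) → Y),
      ∀ y ∈ A, g (f y) = y := by
  have : Fintype.card A ≤ Fintype.card (Fin k → Bool) := by simpa using hA
  obtain ⟨e⟩ := Function.Embedding.nonempty_of_card_le this
  let f : Y → (Fin k → Bool) := fun y => if h : y ∈ A then e ⟨y, h⟩ else default
  refine ⟨f, Function.invFunOn f A, fun y hy => ?_⟩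
  have hinj : Set.InjOn f A := by
    intro x hx y hy hxy
    have hx' : x ∈ A := hx
    have hy' : y ∈ A := hy
    simp only [f, hx', hy', dif_pos] at hxy
    simpa using e.injective hxy
  exact hinj.leftInvOn_invFunOn hy

lemma sc_sum_subtype {Y : Type*} [Fintype Y] (P : Y → Prop) [DecidablePred P] (w : Y → ℝ) :
    ∑ y : {y // P y}, w y.1 = ∑ y ∈ Finset.univ.filter P, w y :=
  (Finset.sum_subtype _ (by simp) w).symm

/-- Optimal success probability with `k` code bits. -/
noncomputable def scP {X : Type*} [Fintype X] [DecidableEq X] (p : X → ℝ) (n k : ℕ) : ℝ :=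
  sSup {v |
          ∃ (f : (Fin n → X) → (Fin k → Bool))
            (g : (Fin k → Bool) → (Fin n → X)),
            v = ∑ xs : {xs : Fin n → X // g (f xs) = xs}, ∏ i, p (xs.1 i)}

lemma sc_le_P {X : Type*} [Fintype X] [DecidableEq X] [Nonempty X] (p : X → ℝ)
    (hp : ∀ x, 0 ≤ p x) (n k : ℕ) (A : Finset (Fin n → X)) (hA : A.card ≤ 2 ^ k) :
    ∑ xs ∈ A, ∏ i, p (xs i) ≤ scP p n k := by
  have hw : ∀ xs : Fin n → X, 0 ≤ ∏ i, p (xs i) := fun xs => Finset.prod_nonneg fun i _ => hp _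
  obtain ⟨f, g, hfg⟩ := sc_code_exists k A hA
  have hb : BddAbove {v |
          ∃ (f : (Fin n → X) → (Fin k → Bool))
            (g : (Fin k → Bool) → (Fin n → X)),
            v = ∑ xs : {xs : Fin n → X // g (f xs) = xs}, ∏ i, p (xs.1 i)} := by
    refine ⟨∑ xs : Fin n → X, ∏ i, p (xs i), ?_⟩
    rintro v ⟨f, g, rfl⟩
    rw [sc_sum_subtype (fun xs => g (f xs) = xs) (fun xs => ∏ i, p (xs i))]
    exact Finset.sum_le_sum_of_subset_of_nonneg (Finset.subset_univ _) (fun xs _ _ => hw xs)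
  refine le_trans ?_ (le_csSup hb ⟨f, g, rfl⟩)
  rw [sc_sum_subtype (fun xs => g (f xs) = xs) (fun xs => ∏ i, p (xs i))]
  refine Finset.sum_le_sum_of_subset_of_nonneg ?_ (fun xs _ _ => hw xs)
  intro xs hxs
  simpa using hfg xs hxs

lemma sc_P_le {X : Type*} [Fintype X] [DecidableEq X] [Nonempty X] (p : X → ℝ)
    (hp : ∀ x, 0 ≤ p x) (n k : ℕ) (β : ℝ) (hβ : 1 < β) :
    scP p n k ≤ ((2:ℝ) ^ k) ^ ((β - 1) / β) * ((∑ x, p x ^ β) ^ n) ^ (1 / β) := by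
  apply csSup_le
  · exact ⟨_, fun _ => default, fun _ => Classical.arbitrary _, rfl⟩
  · rintro v ⟨f, g, rfl⟩
    rw [sc_sum_subtype (fun xs => g (f xs) = xs) (fun xs => ∏ i, p (xs i))]
    refine (sc_holder p hp β hβ n _).trans ?_
    have h0 : 0 ≤ ∑ x, p x ^ β := Finset.sum_nonneg fun x _ => Real.rpow_nonneg (hp x) _
    apply mul_le_mul_of_nonneg_right _ (by positivity)
    apply Real.rpow_le_rpow (by positivity)
    · exact_mod_cast sc_code_card k f g
    · exact div_nonneg (by linarith) (by linarith)

lemma sc_P_pos {X : Type*} [Fintype X] [DecidableEq X] [Nonempty X] (p : X → ℝ)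
    (hp : ∀ x, 0 ≤ p x) (x : X) (hx : 0 < p x) (n k : ℕ) : 0 < scP p n k := by
  refine lt_of_lt_of_le ?_ (sc_le_P p hp n k {fun _ => x} ?_)
  · simp; positivity
  · simp; exact Nat.one_le_two_pow

lemma sc_lower {X : Type*} [Fintype X] [DecidableEq X] [Nonempty X] (p : X → ℝ)
    (hp : ∀ x, 0 ≤ p x) (x : X) (hx : 0 < p x) (r : ℝ) (hr0 : 0 ≤ r)
    (β : ℝ) (hβ : 1 < β) (n : ℕ) (hn : 0 < n) :
    ((β - 1) / β) * ((1 / (1 - β)) * Real.logb 2 (∑ x, p x ^ β) - r) - 1 / n ≤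
      (-1 / (n : ℝ)) * Real.logb 2 (scP p n (Nat.ceil ((n : ℝ) * r))) := by
  set k := Nat.ceil ((n : ℝ) * r)
  have hk : (k : ℝ) ≤ n * r + 1 := (Nat.ceil_lt_add_one (by positivity)).le
  have hn' : (0:ℝ) < n := by exact_mod_cast hn
  have hZ : 0 < ∑ x, p x ^ β :=
    lt_of_lt_of_le (Real.rpow_pos_of_pos hx β) (Finset.single_le_sum (f := fun x => p x ^ β)
      (fun y _ => Real.rpow_nonneg (hp y) β) (Finset.mem_univ x))
  have h := Real.logb_le_logb_of_le (b := 2) (by norm_num) (sc_P_pos p hp x hx n k)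
    (sc_P_le p hp n k β hβ)
  rw [Real.logb_mul (by positivity) (by positivity),
    Real.logb_rpow_eq_mul_logb_of_pos (by positivity),
    Real.logb_rpow_eq_mul_logb_of_pos (by positivity), Real.logb_pow, Real.logb_pow,
    Real.logb_self_eq_one (by norm_num)] at h
  set l := Real.logb 2 (∑ x, p x ^ β)
  set P := Real.logb 2 (scP p n k)
  have hb : 0 < β := by linarith
  have e : ((β - 1) / β) * ((1 / (1 - β)) * l - r) = - (l / β) - ((β - 1) / β) * r := by
    have : 1 - β ≠ 0 := by linarith
    field_simp
    ring
  rw [e]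
  have ht0 : 0 ≤ (β - 1) / β := div_nonneg (by linarith) hb.le
  have ht1 : (β - 1) / β ≤ 1 := by rw [div_le_one hb]; linarith
  set t := (β - 1) / β
  have h2 : P ≤ t * (n * r) + 1 + n * (l / β) := by
    have : t * (k * 1) ≤ t * (n * r + 1) := by
      apply mul_le_mul_of_nonneg_left _ ht0; linarith
    have e2 : 1 / β * (n * l) = n * (l / β) := by ring
    rw [e2] at h
    nlinarith
  rw [div_mul_eq_mul_div (-1 : ℝ), le_div_iff₀ hn', sub_mul, one_div, inv_mul_cancel₀ hn'.ne']
  nlinarith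

/-- Partition function. -/
noncomputable def scZ {X : Type*} [Fintype X] (p : X → ℝ) (β : ℝ) : ℝ := ∑ x, p x ^ β

/-- Mean surprisal under the tilted distribution. -/
noncomputable def scA {X : Type*} [Fintype X] (p : X → ℝ) (β : ℝ) : ℝ :=
  ∑ x, p x ^ β / scZ p β * (-Real.logb 2 (p x))

/-- Entropy of the tilted distribution. -/
noncomputable def scH {X : Type*} [Fintype X] (p : X → ℝ) (β : ℝ) : ℝ :=
  β * scA p β + Real.logb 2 (scZ p β)

lemma scZ_pos {X : Type*} [Fintype X] (p : X → ℝ)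
    (hp : ∀ x, 0 ≤ p x) (x : X) (hx : 0 < p x) (β : ℝ) : 0 < scZ p β :=
  lt_of_lt_of_le (Real.rpow_pos_of_pos hx β) (Finset.single_le_sum (f := fun x => p x ^ β)
      (fun y _ => Real.rpow_nonneg (hp y) β) (Finset.mem_univ x))

lemma scH_cont {X : Type*} [Fintype X] (p : X → ℝ)
    (hp : ∀ x, 0 ≤ p x) (x : X) (hx : 0 < p x) : ContinuousOn (scH p) (Set.Ici 1) := by
  have hc : ∀ y, ContinuousOn (fun β : ℝ => p y ^ β) (Set.Ici 1) := by
    intro y β hβ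
    have : β ≠ 0 := by have : (1:ℝ) ≤ β := hβ; linarith
    exact (Real.continuousAt_const_rpow' this).continuousWithinAt
  have hZ : ContinuousOn (scZ p) (Set.Ici 1) := by
    unfold scZ
    exact continuousOn_finsetSum _ (fun y _ => hc y)
  have hZ0 : ∀ β ∈ Set.Ici (1:ℝ), scZ p β ≠ 0 := fun β _ => (scZ_pos p hp x hx β).ne'
  have hA : ContinuousOn (scA p) (Set.Ici 1) := by
    unfold scA
    exact continuousOn_finsetSum _ (fun y _ => ((hc y).div hZ hZ0).mul continuousOn_const)
  unfold scH
  refine (continuousOn_id.mul hA).add ?_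
  simp only [Real.logb]
  exact (hZ.log hZ0).div_const _

lemma scH_one {X : Type*} [Fintype X] (p : X → ℝ) (hp : IsProb p) :
    scH p 1 = shannonEntropy p := by
  have : scZ p 1 = 1 := by simp [scZ, hp.2]
  simp [scH, scA, this, shannonEntropy]

lemma scH_le {X : Type*} [Fintype X] (p : X → ℝ)
    (hp : ∀ x, 0 ≤ p x) (x : X) (hx : 0 < p x) (β : ℝ) (hβ : 0 < β) :
    scH p β ≤ Fintype.card X / Real.log 2 := by
  have hZ := scZ_pos p hp x hx β
  have hl2 : 0 < Real.log 2 := Real.log_pos (by norm_num)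
  have hs : ∑ y, p y ^ β / scZ p β = 1 := by
    rw [← Finset.sum_div]; exact div_self hZ.ne'
  have e : scH p β = ∑ y, p y ^ β / scZ p β * (β * -Real.logb 2 (p y) + Real.logb 2 (scZ p β)) := by
    simp only [mul_add, Finset.sum_add_distrib, ← Finset.sum_mul, hs, scH, scA, Finset.mul_sum]
    rw [one_mul]
    congr 1
    exact Finset.sum_congr rfl fun y _ => by ring
  rw [e, show (Fintype.card X : ℝ) / Real.log 2 = ∑ _y : X, 1 / Real.log 2 by simp; rfl]
  apply Finset.sum_le_sum
  intro y _
  rcases (hp y).eq_or_lt with h | h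
  · rw [← h, Real.zero_rpow hβ.ne']; simp; positivity
  · have hq : 0 < p y ^ β := Real.rpow_pos_of_pos h β
    have e2 : β * -Real.logb 2 (p y) + Real.logb 2 (scZ p β)
        = Real.log (scZ p β / p y ^ β) / Real.log 2 := by
      rw [Real.log_div hZ.ne' hq.ne', Real.log_rpow h]; simp only [Real.logb]; ring
    rw [e2, mul_div_assoc', div_le_div_iff_of_pos_right hl2]
    have h3 := Real.log_le_sub_one_of_pos (div_pos hZ hq)
    calc _ ≤ p y ^ β / scZ p β * (scZ p β / p y ^ β) := by
          apply mul_le_mul_of_nonneg_left _ (by positivity); linarith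
      _ = 1 := by field_simp

lemma sc_upper {X : Type*} [Fintype X] [DecidableEq X] [Nonempty X] (p : X → ℝ)
    (hp : ∀ x, 0 ≤ p x) (x : X) (hx : 0 < p x) (r : ℝ)
    (β : ℝ) (hβ : 1 < β) (hH : r ≤ scH p β) (ε : ℝ) (hε : 0 < ε) :
    ∀ᶠ n : ℕ in Filter.atTop,
      (-1 / (n : ℝ)) * Real.logb 2 (scP p n (Nat.ceil ((n : ℝ) * r))) ≤ scA p β - r + ε := by
  have hZ := scZ_pos p hp x hx β
  set a := scA p β with ha
  set δ := ε / (2 * (β + 1)) with hδd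
  have hδ : 0 < δ := by positivity
  have hδe : (β + 1) * δ = ε / 2 := by rw [hδd]; field_simp
  have hch := sc_cheb (fun y => p y ^ β / scZ p β) (fun y => -Real.logb 2 (p y))
    (fun y => div_nonneg (Real.rpow_nonneg (hp y) _) hZ.le)
    (by rw [← Finset.sum_div]; exact div_self hZ.ne') a rfl δ hδ
  filter_upwards [hch, Filter.eventually_ge_atTop (⌈2 / ε⌉₊ + 1)] with n hn hn2
  have hn1 : 2 / ε + 1 ≤ n := by
    have := Nat.le_ceil (2 / ε)
    have h2 : ((⌈2 / ε⌉₊ + 1 : ℕ) : ℝ) ≤ n := by exact_mod_cast hn2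
    push_cast at h2; linarith
  have hn' : (0:ℝ) < n := by
    have : 0 < 2 / ε := by positivity
    linarith
  have hn3 : 2 ≤ n * ε := by
    have : 2 / ε ≤ n := by linarith
    rwa [div_le_iff₀ hε] at this
  classical
  set T : Finset (Fin n → X) := Finset.univ.filter (fun xs => (∀ i, 0 < p (xs i)) ∧
    |∑ i, -Real.logb 2 (p (xs i)) - n * a| ≤ n * δ) with hT
  have hT1 := hn T (by
    intro xs h1 h2
    simp only [hT, Finset.mem_filter, Finset.mem_univ, true_and]
    refine ⟨fun i => lt_of_le_of_ne (hp _) fun h => h1 i ?_, h2⟩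
    rw [← h, Real.zero_rpow (by linarith)]; simp)
  have hprod : ∀ xs ∈ T, ∏ i, p (xs i) = (2:ℝ) ^ (-∑ i, -Real.logb 2 (p (xs i))) := by
    intro xs hxs
    have h1 := (Finset.mem_filter.mp hxs).2.1
    rw [← Finset.sum_neg_distrib, Real.rpow_sum_of_pos (by norm_num)]
    refine Finset.prod_congr rfl fun i _ => ?_
    rw [neg_neg, Real.rpow_logb (by norm_num) (by norm_num) (h1 i)]
  have hple : ∀ xs ∈ T, (2:ℝ) ^ (-(n * (a + δ))) ≤ ∏ i, p (xs i) := by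
    intro xs hxs
    rw [hprod xs hxs]
    apply Real.rpow_le_rpow_of_exponent_le (by norm_num)
    have h1 := abs_le.mp (Finset.mem_filter.mp hxs).2.2
    linarith [h1.2]
  have hqle : ∀ xs ∈ T, ∏ i, (p (xs i) ^ β / scZ p β) ≤ (2:ℝ) ^ (-(n * (scH p β - β * δ))) := by
    intro xs hxs
    rw [Finset.prod_div_distrib, Real.finsetProd_rpow _ _ (fun i _ => hp _), hprod xs hxs,
      Finset.prod_const, Finset.card_univ, Fintype.card_fin, ← Real.rpow_mul (by norm_num)]
    have e : scZ p β ^ n = (2:ℝ) ^ (n * Real.logb 2 (scZ p β)) := by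
      rw [mul_comm, Real.rpow_mul (by norm_num), Real.rpow_logb (by norm_num) (by norm_num) hZ,
        Real.rpow_natCast]
    rw [e, ← Real.rpow_sub (by norm_num)]
    apply Real.rpow_le_rpow_of_exponent_le (by norm_num)
    have h1 := abs_le.mp (Finset.mem_filter.mp hxs).2.2
    have h2 : β * (n * a - n * δ) ≤ β * ∑ i, -Real.logb 2 (p (xs i)) :=
      mul_le_mul_of_nonneg_left (by linarith [h1.1]) (by linarith)
    unfold scH
    rw [← ha]
    nlinarith
  have hcard : (2:ℝ) ^ (n * (scH p β - β * δ) - 1) ≤ T.card := by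
    have h1 := hT1.trans (Finset.sum_le_card_nsmul T _ _ hqle)
    rw [nsmul_eq_mul, Real.rpow_neg (by norm_num), ← div_eq_mul_inv, le_div_iff₀ (by positivity)] at h1
    rw [Real.rpow_sub (by norm_num), Real.rpow_one]
    linarith
  set k := Nat.ceil ((n : ℝ) * r)
  have hk : (n : ℝ) * r ≤ k := Nat.le_ceil _
  obtain ⟨A, hAT, hAc⟩ := Finset.exists_subset_card_eq (Nat.min_le_right (2 ^ k) T.card)
  have hAcard : (2:ℝ) ^ (n * (r - β * δ) - 1) ≤ A.card := by
    rw [hAc, Nat.cast_min]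
    apply le_min
    · push_cast
      rw [← Real.rpow_natCast]
      apply Real.rpow_le_rpow_of_exponent_le (by norm_num)
      have : 0 ≤ n * (β * δ) := by positivity
      nlinarith
    · refine le_trans (Real.rpow_le_rpow_of_exponent_le (by norm_num) ?_) hcard
      have := mul_le_mul_of_nonneg_left hH hn'.le
      nlinarith
  have hP := sc_le_P p hp n k A (by rw [hAc]; exact Nat.min_le_left _ _)
  have h5 := (Finset.card_nsmul_le_sum A _ _ (fun xs hxs => hple xs (hAT hxs))).trans hP
  rw [nsmul_eq_mul] at h5
  have h6 : (2:ℝ) ^ ((n * (r - β * δ) - 1) + (-(n * (a + δ)))) ≤ scP p n k := by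
    rw [Real.rpow_add (by norm_num)]
    exact (mul_le_mul_of_nonneg_right hAcard (by positivity)).trans h5
  have h7 := (Real.le_logb_iff_rpow_le (by norm_num) (sc_P_pos p hp x hx n k)).mpr h6
  set L := Real.logb 2 (scP p n k)
  rw [div_mul_eq_mul_div, div_le_iff₀ hn']
  have h8 : n * ((β + 1) * δ) = n * (ε / 2) := by rw [hδe]
  nlinarith

/-- Strong converse exponent of classical data compression:
for `0 ≤ r < H(p)`,
`lim_n (-1/n) log₂ P_s(n,r) = sup_{β>1} ((β-1)/β)(H_β(p) - r)`,
where `P_s(n,r)` is the optimal success probability over encoder/decoder pairs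
`f : Xⁿ → {0,1}^{⌈nr⌉}`, `g : {0,1}^{⌈nr⌉} → Xⁿ`. -/
theorem sc_exponent_classical_compression {X : Type*} [Fintype X] [DecidableEq X] (p : X → ℝ)
    (hp : IsProb p) (r : ℝ) (hr0 : 0 ≤ r) (hr : r < shannonEntropy p) :
    Filter.Tendsto (fun n : ℕ =>
        (-1 / (n : ℝ)) * Real.logb 2 (sSup {v |
          ∃ (f : (Fin n → X) → (Fin (Nat.ceil ((n : ℝ) * r)) → Bool))
            (g : (Fin (Nat.ceil ((n : ℝ) * r)) → Bool) → (Fin n → X)),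
            v = ∑ xs : {xs : Fin n → X // g (f xs) = xs}, ∏ i, p (xs.1 i)}))
      Filter.atTop
      (nhds (sSup {v | ∃ β : ℝ, 1 < β ∧
        v = ((β - 1) / β) * ((1 / (1 - β)) * Real.logb 2 (∑ x, p x ^ β) - r)})) := by
  obtain ⟨x, hx⟩ : ∃ x, 0 < p x := by
    by_contra h
    push Not at h
    have := Finset.sum_nonpos (s := Finset.univ) (fun y _ => h y)
    rw [hp.2] at this
    linarith
  have : Nonempty X := ⟨x⟩
  have hp0 := hp.1
  set v : ℝ → ℝ := fun β => ((β - 1) / β) * ((1 / (1 - β)) * Real.logb 2 (∑ x, p x ^ β) - r)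
    with hv
  change Filter.Tendsto (fun n : ℕ =>
        (-1 / (n : ℝ)) * Real.logb 2 (scP p n (Nat.ceil ((n : ℝ) * r)))) Filter.atTop
        (nhds (sSup {w | ∃ β : ℝ, 1 < β ∧ w = v β}))
  set S := sSup {w | ∃ β : ℝ, 1 < β ∧ w = v β} with hS
  have hlow : ∀ β, 1 < β → ∀ n : ℕ, 0 < n → v β - 1 / n ≤
      (-1 / (n : ℝ)) * Real.logb 2 (scP p n (Nat.ceil ((n : ℝ) * r))) :=
    fun β hβ n hn => sc_lower p hp0 x hx r hr0 β hβ n hn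
  have hbdd : BddAbove {w | ∃ β : ℝ, 1 < β ∧ w = v β} := by
    refine ⟨(-1 / ((1:ℕ) : ℝ)) * Real.logb 2 (scP p 1 (Nat.ceil (((1:ℕ) : ℝ) * r))) + 1, ?_⟩
    rintro w ⟨β, hβ, rfl⟩
    have := hlow β hβ 1 one_pos
    have e : (1:ℝ) / ((1:ℕ):ℝ) = 1 := by simp
    rw [e] at this
    linarith
  have hne : {w | ∃ β : ℝ, 1 < β ∧ w = v β}.Nonempty := ⟨v 2, 2, by norm_num, rfl⟩
  have hvS : ∀ β, 1 < β → v β ≤ S := fun β hβ => le_csSup hbdd ⟨β, hβ, rfl⟩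
  have hlowS : ∀ n : ℕ, 0 < n → S - 1 / n ≤
      (-1 / (n : ℝ)) * Real.logb 2 (scP p n (Nat.ceil ((n : ℝ) * r))) := by
    intro n hn
    rw [sub_le_iff_le_add]
    apply csSup_le hne
    rintro w ⟨β, hβ, rfl⟩
    linarith [hlow β hβ n hn]
  have hid : ∀ β, 1 < β → scA p β - r = v β + (scH p β - r) / β := by
    intro β hβ
    have h1 : 1 - β ≠ 0 := by linarith
    have h2 : β ≠ 0 := by linarith
    simp only [hv, scH]
    rw [show (∑ x, p x ^ β) = scZ p β from rfl]
    field_simp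
    ring
  have hsel : ∀ ε > 0, ∃ β, 1 < β ∧ r ≤ scH p β ∧ scA p β - r ≤ S + ε := by
    intro ε hε
    have h1 : r < scH p 1 := by rw [scH_one p hp]; exact hr
    by_cases hc : ∃ β, 1 < β ∧ scH p β ≤ r
    · obtain ⟨β, hβ, hle⟩ := hc
      obtain ⟨γ, hγ, he⟩ := intermediate_value_Icc' hβ.le
        ((scH_cont p hp0 x hx).mono (fun y hy => hy.1)) ⟨hle, h1.le⟩
      have hγ1 : 1 < γ := by
        refine lt_of_le_of_ne hγ.1 ?_
        rintro rfl
        linarith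
      refine ⟨γ, hγ1, he.ge, ?_⟩
      rw [hid γ hγ1, he]
      simp
      linarith [hvS γ hγ1]
    · push Not at hc
      set C := (Fintype.card X : ℝ) / Real.log 2 with hC
      have hC0 : 0 ≤ C := by
        have : 0 < Real.log 2 := Real.log_pos (by norm_num)
        positivity
      have hβ : 1 < C / ε + 2 := by
        have : 0 ≤ C / ε := by positivity
        linarith
      refine ⟨C / ε + 2, hβ, (hc _ hβ).le, ?_⟩
      rw [hid _ hβ]
      have h3 := scH_le p hp0 x hx (C / ε + 2) (by linarith)
      have h4 : (scH p (C / ε + 2) - r) / (C / ε + 2) ≤ ε := by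
        rw [div_le_iff₀ (by linarith)]
        have : ε * (C / ε + 2) = C + 2 * ε := by field_simp
        rw [this]
        linarith
      linarith [hvS _ hβ]
  rw [Metric.tendsto_atTop']
  intro ε hε
  obtain ⟨β, hβ, hrH, hle⟩ := hsel (ε / 3) (by positivity)
  have hup := sc_upper p hp0 x hx r β hβ hrH (ε / 3) (by positivity)
  have h1n : ∀ᶠ n : ℕ in Filter.atTop, (1:ℝ) / n < ε :=
    (tendsto_order.mp tendsto_one_div_atTop_nhds_zero_nat).2 ε hε
  obtain ⟨N, hN⟩ := Filter.eventually_atTop.mp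
    ((hup.and h1n).and (Filter.eventually_gt_atTop 0))
  refine ⟨N, fun n hn => ?_⟩
  obtain ⟨⟨h1, h2⟩, h3⟩ := hN n hn.le
  have h4 := hlowS n h3
  rw [Real.dist_eq, abs_lt]
  constructor <;> linarith
end
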